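/- Small-model property for NFH_∃∀: let 𝓐 be an NFH with quantification condition α = ∃x₁⋯∃xₘ∀xₘ₊₁⋯∀xₖ where 1 ≤ m < k. Then 𝓛(𝓐) ≠ ∅ if and only if 𝓐 accepts some hyperword S with |S| ≤ m. -/

import Mathlib

/-- The length of the longest word in a `k`-tuple of words. -/
def maxLen {α : Type} {k : ℕ} (v : Fin k → List α) : ℕ :=
  Finset.univ.sup fun i => (v i).length

/-- `zip` of a `k`-tuple of words over `α`: the word over `k`-tuples of
`Option α`, where `none` plays the role of the padding symbol `#`. Its length
is the length of the longest word, and its `j`-th letter has `i`-th component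
the `j`-th letter of the `i`-th word (or `#` = `none` if that word has ended). -/
def zipWord {α : Type} {k : ℕ} (v : Fin k → List α) : List (Fin k → Option α) :=
  (List.range (maxLen v)).map fun j i => (v i)[j]?

/-- A nondeterministic finite hyperautomaton (NFH) with `k` word variables:
an NFA over the alphabet of `k`-tuples `(Σ ∪ {#})ᵏ` together with a
quantification condition, where the `i`-th quantifier binds the `i`-th
variable (`true` = ∃, `false` = ∀). -/
structure NFH (α σ : Type) (k : ℕ) where
  quant : Fin k → Bool
  aut : NFA (Fin k → Option α) σ

/-- Satisfaction of the suffix `𝔔ᵢ₊₁xᵢ₊₁ ⋯ 𝔔ₖxₖ` of the quantification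
condition by a hyperword `S`, given a partial assignment `v` to the first `i`
variables: when all variables are assigned, the underlying NFA must accept the
zip of the assignment. -/
def NFH.SatFrom {α σ : Type} {k : ℕ} (A : NFH α σ k) (S : Set (List α)) :
    ℕ → (Fin k → List α) → Prop
  | i, v =>
    if h : i < k then
      if A.quant ⟨i, h⟩ then
        ∃ w ∈ S, A.SatFrom S (i + 1) (Function.update v ⟨i, h⟩ w)
      else
        ∀ w ∈ S, A.SatFrom S (i + 1) (Function.update v ⟨i, h⟩ w)
    else
      zipWord v ∈ A.aut.accepts
  termination_by i _ => k - i
  decreasing_by all_goals omega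

/-- A hyperword `S` is accepted by the NFH `A` if it satisfies the full
quantification condition of `A`. -/
def NFH.Accepts {α σ : Type} {k : ℕ} (A : NFH α σ k) (S : Set (List α)) : Prop :=
  A.SatFrom S 0 fun _ => []

/-- The hyperlanguage of an NFH: the set of all nonempty hyperwords it accepts. -/
def NFH.hyperLang {α σ : Type} {k : ℕ} (A : NFH α σ k) : Set (Set (List α)) :=
  { S | S.Nonempty ∧ A.Accepts S }

/-!
A universally quantified suffix is inherited by every subset of a hyperword. Hence, once witnesses
for the existential variables have been chosen in an accepted hyperword `S`, every hyperword between
the set `W` of these witnesses and `S` is accepted: the same witnesses remain available, and the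
universal variables range over fewer words. In particular `W` is accepted, if it is nonempty.
-/

namespace NFH

variable {α σ : Type} {k m : ℕ} {A : NFH α σ k} {S T : Set (List α)}

theorem satFrom_iff_of_le {i : ℕ} {v : Fin k → List α} (hi : k ≤ i) :
    A.SatFrom S i v ↔ zipWord v ∈ A.aut.accepts := by
  rw [SatFrom, dif_neg hi.not_gt]

theorem satFrom_iff_exists {i : ℕ} {v : Fin k → List α} (hik : i < k)
    (hi : A.quant ⟨i, hik⟩ = true) :
    A.SatFrom S i v ↔ ∃ w ∈ S, A.SatFrom S (i + 1) (Function.update v ⟨i, hik⟩ w) := by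
  rw [SatFrom, dif_pos hik, if_pos hi]

theorem satFrom_iff_forall {i : ℕ} {v : Fin k → List α} (hik : i < k)
    (hi : A.quant ⟨i, hik⟩ = false) :
    A.SatFrom S i v ↔ ∀ w ∈ S, A.SatFrom S (i + 1) (Function.update v ⟨i, hik⟩ w) := by
  rw [SatFrom, dif_pos hik, if_neg (by simp [hi])]

theorem SatFrom.anti_of_forall {i : ℕ} {v : Fin k → List α}
    (hq : ∀ j : Fin k, i ≤ j → A.quant j = false) (hTS : T ⊆ S) (h : A.SatFrom S i v) :
    A.SatFrom T i v := by
  rcases lt_or_ge i k with hik | hki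
  · rw [satFrom_iff_forall hik (hq ⟨i, hik⟩ le_rfl)] at h ⊢
    exact fun w hw =>
      SatFrom.anti_of_forall (fun j hj => hq j (Nat.le_of_succ_le hj)) hTS (h w (hTS hw))
  · rwa [satFrom_iff_of_le hki] at h ⊢
termination_by k - i

/-- Allowing every `T` between `W` and `S`, rather than only `T = W`, is what makes the induction
work: the witnesses chosen for earlier variables still have to be added to `W`. -/
theorem SatFrom.exists_finset_forall_Icc {i : ℕ} {v : Fin k → List α}
    (hq : ∀ j : Fin k, A.quant j = decide ((j : ℕ) < m)) (h : A.SatFrom S i v) :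
    ∃ W : Finset (List α), ↑W ⊆ S ∧ W.card ≤ m - i ∧
      ∀ T ∈ Set.Icc (W : Set (List α)) S, A.SatFrom T i v := by
  classical
  by_cases hi : i < k ∧ i < m
  · obtain ⟨hik, him⟩ := hi
    have hexists : A.quant ⟨i, hik⟩ = true := by simpa [hq] using him
    obtain ⟨w, hwS, hw⟩ := (satFrom_iff_exists hik hexists).1 h
    obtain ⟨W, hWS, hcard, hW⟩ := SatFrom.exists_finset_forall_Icc hq hw
    refine ⟨insert w W, ?_, (Finset.card_insert_le w W).trans (by omega), fun T hT => ?_⟩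
    · simpa [Set.insert_subset_iff] using ⟨hwS, hWS⟩
    · obtain ⟨hwT, hWT⟩ : w ∈ T ∧ ↑W ⊆ T := by simpa [Set.insert_subset_iff] using hT.1
      exact (satFrom_iff_exists hik hexists).2 ⟨w, hwT, hW T ⟨hWT, hT.2⟩⟩
  · have hforall : ∀ j : Fin k, i ≤ j → A.quant j = false := by
      intro j hij
      rw [hq, decide_eq_false_iff_not]
      omega
    exact ⟨∅, by simp, by simp, fun T hT => h.anti_of_forall hforall hT.2⟩
termination_by k - i

end NFH

/-- The maximum accounts for purely universal conditions, where any single word suffices. -/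
theorem nfhEA_small_model_general {α σ : Type} {k m : ℕ} {A : NFH α σ k}
    (hq : ∀ i : Fin k, A.quant i = decide ((i : ℕ) < m)) {S : Set (List α)}
    (hS : S ∈ A.hyperLang) :
    ∃ T ⊆ S, T ∈ A.hyperLang ∧ T.Finite ∧ T.ncard ≤ max m 1 := by
  obtain ⟨⟨w, hw⟩, hacc⟩ := hS
  obtain ⟨W, hWS, hcard, hW⟩ := NFH.SatFrom.exists_finset_forall_Icc hq hacc
  rcases W.eq_empty_or_nonempty with rfl | hne
  · have hwS : {w} ⊆ S := Set.singleton_subset_iff.2 hw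
    exact ⟨{w}, hwS, ⟨Set.singleton_nonempty w, hW {w} ⟨by simp, hwS⟩⟩,
      Set.finite_singleton w, by simp⟩
  · refine ⟨W, hWS, ⟨hne, hW W ⟨subset_rfl, hWS⟩⟩, W.finite_toSet, ?_⟩
    rw [Set.ncard_coe_finset]
    exact le_max_of_le_left hcard

/-- **Small-model property for NFH_∃∀.** If the quantification condition of `A`
is `∃x₁⋯∃xₘ∀xₘ₊₁⋯∀xₖ` with `1 ≤ m < k`, then `𝓛(A) ≠ ∅` iff `A` accepts some
hyperword of size at most `m`. -/
theorem nfhEA_small_model {α σ : Type} {k m : ℕ} (A : NFH α σ k)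
    (hm : 1 ≤ m) (hmk : m < k)
    (hq : ∀ i : Fin k, A.quant i = decide ((i : ℕ) < m)) :
    A.hyperLang.Nonempty ↔ ∃ S ∈ A.hyperLang, S.Finite ∧ S.ncard ≤ m := by
  refine ⟨fun ⟨S, hS⟩ => ?_, fun ⟨S, hS, _⟩ => ⟨S, hS⟩⟩
  obtain ⟨T, _, hT, hfin, hcard⟩ := nfhEA_small_model_general hq hS
  exact ⟨T, hT, hfin, by rwa [max_eq_left hm] at hcard⟩
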